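/- Let (μ_n) be a sequence in 𝓜 converging weakly to μ ∈ 𝓜 with lim_{n→∞} ∫ log η dμ_n = ∫ log η dμ > −∞. If μ gives zero mass to the boundaries of the atoms of 𝒫, then limsup_{n→∞} h_{μ_n}(f,𝒫) ≤ h_μ(f,𝒫). -/

import Mathlib

open MeasureTheory Filter Metric Set
open scoped ENNReal NNReal Topology

noncomputable section

variable {X : Type*} [MetricSpace X] [CompactSpace X] [MeasurableSpace X] [BorelSpace X]

/-- `Ω = X \ ⋃_{i ≥ 0} f^{-i}(I)`: the set of points whose whole forward orbit avoids `I`. -/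
def dynOmega (f : X → X) (I : Set X) : Set X := {x | ∀ n : ℕ, f^[n] x ∉ I}

/-- `μ ∈ 𝓜`: a Borel probability measure with `μ(I) = 0` which is invariant, `f_* μ = μ`. -/
def MemM (f : X → X) (I : Set X) (μ : Measure X) : Prop :=
  IsProbabilityMeasure μ ∧ μ I = 0 ∧ Measure.map f μ = μ

/-- A countable Borel partition of a set `S`, indexed by `ℕ` (empty atoms are allowed). -/
def IsCountablePartition (S : Set X) (P : ℕ → Set X) : Prop :=
  (∀ i, MeasurableSet (P i)) ∧ (Pairwise fun i j => Disjoint (P i) (P j)) ∧ (⋃ i, P i) = S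

/-- The entropy `H_ν(P) = ∑_{P ∈ 𝒫} - ν(P) log ν(P)` of a countable partition,
with values in `ℝ≥0∞`. -/
def partEntropy {ι : Type*} (ν : Measure X) (P : ι → Set X) : ℝ≥0∞ :=
  ∑' i, ENNReal.ofReal (Real.negMulLog (ν (P i)).toReal)

/-- The atoms of the refined partition `⋁_{i=0}^{q-1} f^{-i} 𝒫`. -/
def refinedAtoms (f : X → X) (P : ℕ → Set X) (q : ℕ) : (Fin q → ℕ) → Set X :=
  fun s => ⋂ i : Fin q, f^[(i : ℕ)] ⁻¹' P (s i)

/-- `V_n = {x : e^{-(n+1)} < η x ≤ e^{-n}}`. -/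
def Vset (η : X → ℝ) (n : ℕ) : Set X :=
  {x | Real.exp (-(n + 1 : ℝ)) < η x ∧ η x ≤ Real.exp (-(n : ℝ))}

/-- The Mané partition `𝒫` associated to `η` on a manifold of complex dimension `k`:
a countable Borel partition of `{η ≠ 0}` such that every nonempty atom is contained in
some `V_n` and has diameter `< r_n = e^{-(n+1)}`, and such that the number of atoms
contained in `V_n` is at most `C (1/r_n)^{2k} = C e^{2k(n+1)}` for a constant `C > 0`. -/
def IsManePartition (k : ℕ) (η : X → ℝ) (P : ℕ → Set X) : Prop :=
  IsCountablePartition {x | η x ≠ 0} P ∧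
  (∀ i, (P i).Nonempty → ∃ n : ℕ, P i ⊆ Vset η n ∧
      Metric.diam (P i) < Real.exp (-(n + 1 : ℝ))) ∧
  (∃ C > (0 : ℝ), ∀ n : ℕ,
      {i | (P i).Nonempty ∧ P i ⊆ Vset η n}.Finite ∧
      (({i | (P i).Nonempty ∧ P i ⊆ Vset η n}.ncard : ℝ)
        ≤ C * Real.exp (2 * k * (n + 1 : ℝ))))

/-- `h_ν(f, 𝒫) = inf_{q ≥ 1} (1/q) H_ν(⋁_{i=0}^{q-1} f^{-i} 𝒫)`. -/
def dynEntropy (f : X → X) (ν : Measure X) (P : ℕ → Set X) : ℝ≥0∞ :=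
  ⨅ q : ℕ, partEntropy ν (refinedAtoms f P (q + 1)) / (q + 1)

/-!
Write `w j = (2k + 1) n` when the atom `P j` lies in `V_n`. The bound on the number of atoms in
`V_n` gives `∑ exp (-w j) < ∞`, and `w j ≤ -(2k + 1) log η` on `P j` by definition of `V_n`.
Applying Fatou to the nonnegative functions `-(2k + 1) log η - w j` on the atoms, whose boundaries
are `μ`-null, the convergence of `∫ log η` yields
`limsup ∑ w j * μ_n (P j) ≤ ∑ w j * μ (P j) < ∞`.

The atoms of `⋁_{i < q} f^{-i} 𝒫` also have `μ`-null boundary, because `μ`-almost every orbit avoids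
`I`, so their masses converge. Young's inequality `-x log x ≤ w x + exp (-w)`, used on the atom of
itinerary `s` with `w = ∑ i, w (s i)`, dominates the entropy series by a series whose sums do not
increase in the limit: by invariance the total weight is `q ∑ w j * ν (P j)`, and the exponentials
sum to `(∑ exp (-w j)) ^ q`. Generalized dominated convergence then bounds
`limsup H_{μ_n}(⋁_{i < q} f^{-i} 𝒫)` by `H_μ(⋁_{i < q} f^{-i} 𝒫)` for every `q`, and `h_ν(f, 𝒫)` is
an infimum over `q` of these entropies divided by `q`.
-/

section Series

variable {γ ι : Type*} {L : Filter γ}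

theorem limsup_add_liminf_le_limsup_add [L.NeBot] (u v : γ → ℝ≥0∞) :
    limsup u L + liminf v L ≤ limsup (fun c => u c + v c) L := by
  rw [liminf_eq, sSup_eq_iSup, ENNReal.add_biSup ⟨0, .of_forall fun _ => zero_le⟩]
  refine iSup₂_le fun a ha => ?_
  rw [← limsup_add_const L u a (by isBoundedDefault) (by isBoundedDefault)]
  exact limsup_le_limsup (ha.mono fun c hc => add_le_add_right hc _)

theorem tsum_liminf_le_liminf_tsum [L.IsCountablyGenerated] (u : γ → ι → ℝ≥0∞) :
    ∑' i, liminf (fun c => u c i) L ≤ liminf (fun c => ∑' i, u c i) L := by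
  let _ : MeasurableSpace ι := ⊤
  simpa only [lintegral_count] using
    lintegral_liminf_le (μ := Measure.count) (u := L) (f := u) fun _ => measurable_from_top

/-- Generalized dominated convergence: Fatou's lemma is applied to the slack `r` between `a` and its
dominant `b`, which is a separate argument so that no truncated subtraction enters the statement. -/
theorem limsup_tsum_le_of_add_eq [L.NeBot] [L.IsCountablyGenerated]
    {a r b : γ → ι → ℝ≥0∞} {a₀ r₀ b₀ : ι → ℝ≥0∞}
    (hab : ∀ c i, a c i + r c i = b c i) (hab₀ : ∀ i, a₀ i + r₀ i = b₀ i)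
    (hr : ∀ i, r₀ i ≤ liminf (fun c => r c i) L) (hb₀ : ∑' i, b₀ i ≠ ∞)
    (hb : limsup (fun c => ∑' i, b c i) L ≤ ∑' i, b₀ i) :
    limsup (fun c => ∑' i, a c i) L ≤ ∑' i, a₀ i := by
  have hsum₀ : ∑' i, a₀ i + ∑' i, r₀ i = ∑' i, b₀ i := by
    rw [← ENNReal.tsum_add, tsum_congr hab₀]
  have hr₀ : ∑' i, r₀ i ≠ ∞ := ne_top_of_le_ne_top hb₀ (hsum₀ ▸ le_add_self)
  refine ENNReal.le_of_add_le_add_right hr₀ ?_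
  calc limsup (fun c => ∑' i, a c i) L + ∑' i, r₀ i
      ≤ limsup (fun c => ∑' i, a c i) L + liminf (fun c => ∑' i, r c i) L := by
        gcongr
        exact (ENNReal.tsum_le_tsum hr).trans (tsum_liminf_le_liminf_tsum r)
    _ ≤ limsup (fun c => ∑' i, a c i + ∑' i, r c i) L := limsup_add_liminf_le_limsup_add _ _
    _ = limsup (fun c => ∑' i, b c i) L := by
        simp only [← ENNReal.tsum_add, hab]
    _ ≤ ∑' i, a₀ i + ∑' i, r₀ i := hsum₀ ▸ hb

theorem tsum_prod_pi_eq_pow (w : ι → ℝ≥0∞) (q : ℕ) :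
    ∑' s : Fin q → ι, ∏ i, w (s i) = (∑' j, w j) ^ q := by
  induction q with
  | zero => simp
  | succ q ih =>
    rw [← (Fin.consEquiv fun _ : Fin (q + 1) => ι).tsum_eq, ENNReal.tsum_prod']
    simp only [Fin.consEquiv_apply, Fin.prod_univ_succ, Fin.cons_zero, Fin.cons_succ,
      ENNReal.tsum_mul_left, ENNReal.tsum_mul_right, ih, pow_succ']

end Series

theorem negMulLog_le_mul_add_exp_neg {x : ℝ} (hx : 0 ≤ x) (y : ℝ) :
    Real.negMulLog x ≤ y * x + Real.exp (-y) := by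
  rcases hx.eq_or_lt with rfl | hx
  · simp [Real.exp_nonneg]
  · have h := Real.add_one_le_exp (-y - Real.log x)
    rw [Real.exp_sub, Real.exp_log hx, le_div_iff₀ hx] at h
    rw [Real.negMulLog]
    linarith

theorem ofReal_negMulLog_toReal_le (x : ℝ≥0∞) (w : ℝ≥0) :
    ENNReal.ofReal (Real.negMulLog x.toReal) ≤ w * x + ENNReal.ofReal (Real.exp (-w)) :=
  calc ENNReal.ofReal (Real.negMulLog x.toReal)
      ≤ ENNReal.ofReal (w * x.toReal + Real.exp (-w)) :=
        ENNReal.ofReal_le_ofReal (negMulLog_le_mul_add_exp_neg ENNReal.toReal_nonneg _)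
    _ = w * ENNReal.ofReal x.toReal + ENNReal.ofReal (Real.exp (-w)) := by
        rw [ENNReal.ofReal_add (by positivity) (Real.exp_nonneg _),
          ENNReal.ofReal_mul w.coe_nonneg, ENNReal.ofReal_coe_nnreal]
    _ ≤ w * x + ENNReal.ofReal (Real.exp (-w)) := by
        gcongr
        exact ENNReal.ofReal_toReal_le

section WeakConvergence

variable {α γ : Type*} [TopologicalSpace α] [MeasurableSpace α] [OpensMeasurableSpace α]
  [HasOuterApproxClosed α] {L : Filter γ} [L.IsCountablyGenerated]
  {μs : γ → ProbabilityMeasure α} {μ : ProbabilityMeasure α}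

theorem setLIntegral_ofReal_le_liminf_of_isOpen (hμs : Tendsto μs L (𝓝 μ)) {U : Set α}
    (hU : IsOpen U) {g : α → ℝ} (hg : ContinuousOn g U) (hg0 : ∀ x ∈ U, 0 ≤ g x) :
    ∫⁻ x in U, ENNReal.ofReal (g x) ∂μ ≤
      liminf (fun c => ∫⁻ x in U, ENNReal.ofReal (g x) ∂(μs c)) L := by
  have layerCake (ν : Measure α) :
      ∫⁻ x in U, ENNReal.ofReal (g x) ∂ν = ∫⁻ t in Ioi 0, ν (U ∩ g ⁻¹' Ioi t) := by
    rw [lintegral_eq_lintegral_meas_lt _ (ae_restrict_of_forall_mem hU.measurableSet hg0)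
      (hg.aemeasurable hU.measurableSet)]
    simp only [Measure.restrict_apply' hU.measurableSet, inter_comm U]
    rfl
  simp only [layerCake]
  calc ∫⁻ t in Ioi 0, (μ : Measure α) (U ∩ g ⁻¹' Ioi t)
      ≤ ∫⁻ t in Ioi 0, liminf (fun c => (μs c : Measure α) (U ∩ g ⁻¹' Ioi t)) L :=
        lintegral_mono fun t => ProbabilityMeasure.le_liminf_measure_open_of_tendsto hμs
          (hg.isOpen_inter_preimage hU isOpen_Ioi)
    _ ≤ liminf (fun c => ∫⁻ t in Ioi 0, (μs c : Measure α) (U ∩ g ⁻¹' Ioi t)) L :=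
        lintegral_liminf_le fun c => Antitone.measurable fun s t hst => by gcongr

theorem setLIntegral_ofReal_le_liminf_of_null_frontier (hμs : Tendsto μs L (𝓝 μ)) {E : Set α}
    (hE : (μ : Measure α) (frontier E) = 0) {g : α → ℝ} (hg : ContinuousOn g (interior E))
    (hg0 : ∀ x ∈ E, 0 ≤ g x) :
    ∫⁻ x in E, ENNReal.ofReal (g x) ∂μ ≤
      liminf (fun c => ∫⁻ x in E, ENNReal.ofReal (g x) ∂(μs c)) L :=
  calc ∫⁻ x in E, ENNReal.ofReal (g x) ∂μ
      = ∫⁻ x in interior E, ENNReal.ofReal (g x) ∂μ :=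
        (setLIntegral_congr <| interior_ae_eq_of_null_frontier hE).symm
    _ ≤ liminf (fun c => ∫⁻ x in interior E, ENNReal.ofReal (g x) ∂(μs c)) L :=
        setLIntegral_ofReal_le_liminf_of_isOpen hμs isOpen_interior hg
          fun x hx => hg0 x (interior_subset hx)
    _ ≤ liminf (fun c => ∫⁻ x in E, ENNReal.ofReal (g x) ∂(μs c)) L :=
        liminf_le_liminf <| .of_forall fun _ => lintegral_mono_set interior_subset

end WeakConvergence

/-- The family `A` is a measurable partition of `α` modulo `ν`-null sets: its members are genuinely
disjoint and cover `ν`-almost every point. -/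
structure IsAEPartition {α ι : Type*} [MeasurableSpace α] (ν : Measure α) (A : ι → Set α) :
    Prop where
  measurableSet : ∀ i, MeasurableSet (A i)
  disjoint : Pairwise fun i j => Disjoint (A i) (A j)
  ae_mem : ∀ᵐ x ∂ν, x ∈ ⋃ i, A i

theorem mul_measure_add_setLIntegral_ofReal_sub {α : Type*} [MeasurableSpace α] (ν : Measure α)
    {E : Set α} (hE : MeasurableSet E) {w : ℝ≥0} {φ : α → ℝ} (hw : ∀ x ∈ E, w ≤ φ x) :
    w * ν E + ∫⁻ x in E, ENNReal.ofReal (φ x - w) ∂ν = ∫⁻ x in E, ENNReal.ofReal (φ x) ∂ν := by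
  rw [← setLIntegral_const, ← lintegral_add_left measurable_const]
  refine setLIntegral_congr_fun hE fun x hx => ?_
  rw [← ENNReal.ofReal_coe_nnreal,
    ← ENNReal.ofReal_add w.coe_nonneg (sub_nonneg.2 (hw x hx)), add_sub_cancel]

namespace IsAEPartition

section Integral

variable {α ι : Type*} [MeasurableSpace α] [Countable ι] {ν : Measure α} {A : ι → Set α}

theorem lintegral_eq_tsum (hA : IsAEPartition ν A) (h : α → ℝ≥0∞) :
    ∫⁻ x, h x ∂ν = ∑' i, ∫⁻ x in A i, h x ∂ν := by
  rw [← lintegral_iUnion hA.measurableSet hA.disjoint, Measure.restrict_eq_self_of_ae_mem hA.ae_mem]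

theorem lintegral_eq_tsum_mul_measure (hA : IsAEPartition ν A) {h : α → ℝ≥0∞} {c : ι → ℝ≥0∞}
    (hc : ∀ i, ∀ x ∈ A i, h x = c i) : ∫⁻ x, h x ∂ν = ∑' i, c i * ν (A i) := by
  rw [hA.lintegral_eq_tsum]
  refine tsum_congr fun i => ?_
  rw [setLIntegral_congr_fun (hA.measurableSet i) (hc i), setLIntegral_const]

theorem tsum_setLIntegral_ofReal (hA : IsAEPartition ν A) {φ : α → ℝ} (hφ : Integrable φ ν)
    (hφ0 : ∀ i, ∀ x ∈ A i, 0 ≤ φ x) :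
    ∑' i, ∫⁻ x in A i, ENNReal.ofReal (φ x) ∂ν = ENNReal.ofReal (∫ x, φ x ∂ν) := by
  rw [← hA.lintegral_eq_tsum, ofReal_integral_eq_lintegral_ofReal hφ]
  filter_upwards [hA.ae_mem] with x hx
  obtain ⟨i, hi⟩ := mem_iUnion.1 hx
  exact hφ0 i x hi

theorem tsum_mul_measure_ne_top (hA : IsAEPartition ν A) {φ : α → ℝ} (hφ : Integrable φ ν)
    {w : ι → ℝ≥0} (hw : ∀ i, ∀ x ∈ A i, w i ≤ φ x) : ∑' i, w i * ν (A i) ≠ ∞ := by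
  refine ne_top_of_le_ne_top ?_ <| ENNReal.tsum_le_tsum fun i =>
    (mul_measure_add_setLIntegral_ofReal_sub ν (hA.measurableSet i) (hw i)) ▸ le_self_add
  rw [hA.tsum_setLIntegral_ofReal hφ fun i x hx => (w i).coe_nonneg.trans (hw i x hx)]
  exact ENNReal.ofReal_ne_top

end Integral

theorem limsup_tsum_mul_measure_le {α γ ι : Type*} [TopologicalSpace α] [MeasurableSpace α]
    [OpensMeasurableSpace α] [HasOuterApproxClosed α] [Countable ι] {L : Filter γ} [L.NeBot]
    [L.IsCountablyGenerated] {μs : γ → ProbabilityMeasure α} {μ : ProbabilityMeasure α}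
    {A : ι → Set α} (hA : IsAEPartition (μ : Measure α) A)
    (hAs : ∀ c, IsAEPartition (μs c : Measure α) A) (hμs : Tendsto μs L (𝓝 μ))
    (hfr : ∀ i, (μ : Measure α) (frontier (A i)) = 0)
    {φ : α → ℝ} (hφ : ∀ i, ContinuousOn φ (interior (A i)))
    (hints : ∀ c, Integrable φ (μs c)) (hint : Integrable φ μ)
    (hlim : Tendsto (fun c => ∫ x, φ x ∂(μs c)) L (𝓝 (∫ x, φ x ∂μ)))
    {w : ι → ℝ≥0} (hw : ∀ i, ∀ x ∈ A i, w i ≤ φ x) :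
    limsup (fun c => ∑' i, w i * (μs c : Measure α) (A i)) L ≤
      ∑' i, w i * (μ : Measure α) (A i) := by
  have hφ0 (i : ι) (x : α) (hx : x ∈ A i) : 0 ≤ φ x := (w i).coe_nonneg.trans (hw i x hx)
  have hsum := hA.tsum_setLIntegral_ofReal hint hφ0
  refine limsup_tsum_le_of_add_eq
    (fun c i => mul_measure_add_setLIntegral_ofReal_sub (μs c) (hA.measurableSet i) (hw i))
    (fun i => mul_measure_add_setLIntegral_ofReal_sub μ (hA.measurableSet i) (hw i))
    (fun i => setLIntegral_ofReal_le_liminf_of_null_frontier hμs (hfr i)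
      ((hφ i).sub continuousOn_const) fun x hx => sub_nonneg.2 (hw i x hx))
    (hsum ▸ ENNReal.ofReal_ne_top) ?_
  simp only [(hAs _).tsum_setLIntegral_ofReal (hints _) hφ0, hsum]
  exact (ENNReal.tendsto_ofReal hlim).limsup_eq.le

end IsAEPartition

theorem frontier_iInter_subset {α ι : Type*} [TopologicalSpace α] [Finite ι] (s : ι → Set α) :
    frontier (⋂ i, s i) ⊆ ⋃ i, frontier (s i) := by
  rintro x ⟨hcl, hint⟩
  rw [interior_iInter_of_finite, mem_iInter, not_forall] at hint
  obtain ⟨i, hi⟩ := hint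
  exact mem_iUnion.2 ⟨i, closure_mono (iInter_subset s i) hcl, hi⟩

theorem mem_frontier_of_mem_frontier_preimage {α β : Type*} [TopologicalSpace α]
    [TopologicalSpace β] {g : α → β} {x : α} (hg : ContinuousAt g x) {E : Set β}
    (hx : x ∈ frontier (g ⁻¹' E)) : g x ∈ frontier E := by
  rw [frontier_eq_closure_inter_closure] at hx ⊢
  simp only [mem_inter_iff, mem_closure_iff_frequently] at hx ⊢
  exact ⟨hg.frequently hx.1, hg.frequently hx.2⟩

theorem measure_frontier_preimage_eq_zero {α β : Type*} [TopologicalSpace α] [TopologicalSpace β]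
    [MeasurableSpace α] [MeasurableSpace β] {ν : Measure α} {ν' : Measure β} {g : α → β}
    (hg : Measure.QuasiMeasurePreserving g ν ν') (hgc : ∀ᵐ x ∂ν, ContinuousAt g x) {E : Set β}
    (hE : ν' (frontier E) = 0) : ν (frontier (g ⁻¹' E)) = 0 := by
  refine measure_mono_null_ae ?_ (hg.preimage_null hE)
  filter_upwards [hgc] with x hx using mem_frontier_of_mem_frontier_preimage hx

theorem continuousAt_iterate {α : Type*} [TopologicalSpace α] {f : α → α} {x : α}
    (hf : ∀ n : ℕ, ContinuousAt f (f^[n] x)) : ∀ n : ℕ, ContinuousAt f^[n] x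
  | 0 => continuousAt_id
  | n + 1 => by
    rw [Function.iterate_succ']
    exact (hf n).comp (continuousAt_iterate hf n)

theorem ae_forall_iterate {α : Type*} [MeasurableSpace α] {ν : Measure α} {f : α → α}
    (hf : Measure.QuasiMeasurePreserving f ν ν) {p : α → Prop} (hp : ∀ᵐ x ∂ν, p x) :
    ∀ᵐ x ∂ν, ∀ n : ℕ, p (f^[n] x) :=
  ae_all_iff.2 fun n => (hf.iterate n).ae hp

section RefinedAtoms

variable {α : Type*} [MeasurableSpace α] {f : α → α} {ν : Measure α} {P : ℕ → Set α}

theorem isAEPartition_refinedAtoms (hf : Measure.QuasiMeasurePreserving f ν ν)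
    (hP : IsAEPartition ν P) (q : ℕ) : IsAEPartition ν (refinedAtoms f P q) where
  measurableSet s := .iInter fun i => hf.measurable.iterate i (hP.measurableSet (s i))
  disjoint s t hst := by
    obtain ⟨i, hi⟩ := Function.ne_iff.1 hst
    exact ((hP.disjoint hi).preimage f^[i]).mono (iInter_subset _ i) (iInter_subset _ i)
  ae_mem := by
    filter_upwards [ae_forall_iterate hf hP.ae_mem] with x hx
    choose j hj using fun n => mem_iUnion.1 (hx n)
    exact mem_iUnion.2 ⟨fun i => j i, mem_iInter.2 fun i => hj i⟩

theorem tsum_sum_mul_measure_refinedAtoms (hf : MeasurePreserving f ν ν) (hP : IsAEPartition ν P)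
    (c : ℕ → ℝ≥0∞) (q : ℕ) :
    ∑' s, (∑ i, c (s i)) * ν (refinedAtoms f P q s) = q * ∑' j, c j * ν (P j) := by
  obtain ⟨g, hgm, hg⟩ : ∃ g : α → ℝ≥0∞, Measurable g ∧ ∀ j, ∀ x ∈ P j, g x = c j :=
    exists_measurable_piecewise P hP.measurableSet (fun j _ => c j) (fun _ => measurable_const)
      fun _ _ hij _ hx => (disjoint_left.1 (hP.disjoint hij) hx.1 hx.2).elim
  have hgs (s : Fin q → ℕ) (x : α) (hx : x ∈ refinedAtoms f P q s) :
      ∑ i : Fin q, g (f^[i] x) = ∑ i, c (s i) :=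
    Finset.sum_congr rfl fun i _ => hg _ _ (mem_iInter.1 hx i)
  calc ∑' s, (∑ i, c (s i)) * ν (refinedAtoms f P q s)
      = ∫⁻ x, ∑ i : Fin q, g (f^[i] x) ∂ν :=
        ((isAEPartition_refinedAtoms hf.quasiMeasurePreserving hP q).lintegral_eq_tsum_mul_measure
          hgs).symm
    _ = ∑ i : Fin q, ∫⁻ x, g (f^[i] x) ∂ν :=
        lintegral_finsetSum _ fun i _ => hgm.comp (hf.measurable.iterate i)
    _ = ∑ _i : Fin q, ∫⁻ x, g x ∂ν :=
        Finset.sum_congr rfl fun i _ => (hf.iterate i).lintegral_comp hgm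
    _ = q * ∑' j, c j * ν (P j) := by
        rw [Finset.sum_const, Finset.card_univ, Fintype.card_fin, nsmul_eq_mul,
          hP.lintegral_eq_tsum_mul_measure hg]

theorem measure_frontier_refinedAtoms_eq_zero [TopologicalSpace α]
    (hf : Measure.QuasiMeasurePreserving f ν ν)
    (hfc : ∀ᵐ x ∂ν, ContinuousAt f x) (hP : ∀ j, ν (frontier (P j)) = 0) {q : ℕ} (s : Fin q → ℕ) :
    ν (frontier (refinedAtoms f P q s)) = 0 := by
  refine measure_mono_null (frontier_iInter_subset _) (measure_iUnion_null fun i => ?_)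
  refine measure_frontier_preimage_eq_zero (hf.iterate i) ?_ (hP (s i))
  filter_upwards [ae_forall_iterate hf hfc] with x hx using continuousAt_iterate hx i

theorem dynEntropy_congr_ae (hf : Measure.QuasiMeasurePreserving f ν ν) {Q : ℕ → Set α}
    (h : ∀ j, P j =ᵐ[ν] Q j) : dynEntropy f ν P = dynEntropy f ν Q := by
  have hatoms (q : ℕ) (s : Fin q → ℕ) : refinedAtoms f P q s =ᵐ[ν] refinedAtoms f Q q s :=
    Filter.EventuallyEq.countable_iInter fun i => (hf.iterate i).preimage_ae_eq (h (s i))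
  simp only [dynEntropy, partEntropy, measure_congr (hatoms _ _)]

end RefinedAtoms

section LimsupEntropy

variable {α γ ι : Type*} [MeasurableSpace α] {L : Filter γ} {νs : γ → Measure α}
  {ν : Measure α} {f : α → α} {P : ℕ → Set α}

theorem limsup_partEntropy_le [L.NeBot] [L.IsCountablyGenerated] [IsFiniteMeasure ν] {A : ι → Set α}
    (hA : ∀ i, Tendsto (fun c => νs c (A i)) L (𝓝 (ν (A i)))) {w : ι → ℝ≥0}
    (hexp : ∑' i, ENNReal.ofReal (Real.exp (-w i)) ≠ ∞) (hfin : ∑' i, w i * ν (A i) ≠ ∞)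
    (hsup : limsup (fun c => ∑' i, w i * νs c (A i)) L ≤ ∑' i, w i * ν (A i)) :
    limsup (fun c => partEntropy (νs c) A) L ≤ partEntropy ν A := by
  set e : ι → ℝ≥0∞ := fun i => ENNReal.ofReal (Real.exp (-w i))
  have hle (ν' : Measure α) (i : ι) := ofReal_negMulLog_toReal_le (ν' (A i)) (w i)
  have hentropy (i : ι) : Tendsto (fun c => ENNReal.ofReal (Real.negMulLog (νs c (A i)).toReal)) L
      (𝓝 (ENNReal.ofReal (Real.negMulLog (ν (A i)).toReal))) :=
    ENNReal.tendsto_ofReal <| (Real.continuous_negMulLog.tendsto _).comp <|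
      (ENNReal.tendsto_toReal (measure_ne_top _ _)).comp (hA i)
  have hbound (i : ι) : Tendsto (fun c => w i * νs c (A i) + e i) L (𝓝 (w i * ν (A i) + e i)) :=
    (ENNReal.Tendsto.const_mul (hA i) (.inr ENNReal.coe_ne_top)).add_const _
  have hbound_ne_top (i : ι) : w i * ν (A i) + e i ≠ ∞ :=
    ENNReal.add_ne_top.2 ⟨ENNReal.mul_ne_top ENNReal.coe_ne_top (measure_ne_top _ _),
      ENNReal.ofReal_ne_top⟩
  refine limsup_tsum_le_of_add_eq (fun c i => add_tsub_cancel_of_le (hle (νs c) i))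
    (fun i => add_tsub_cancel_of_le (hle ν i))
    (fun i => (ENNReal.Tendsto.sub (hbound i) (hentropy i)
      (.inl (hbound_ne_top i))).liminf_eq.ge) ?_ ?_
  · rw [ENNReal.tsum_add]
    exact ENNReal.add_ne_top.2 ⟨hfin, hexp⟩
  · simp only [ENNReal.tsum_add]
    rw [limsup_add_const L _ _ (by isBoundedDefault) (by isBoundedDefault)]
    gcongr

theorem tsum_ofReal_exp_neg_sum (w : ι → ℝ≥0) (q : ℕ) :
    ∑' s : Fin q → ι, ENNReal.ofReal (Real.exp (-(∑ i, w (s i) : ℝ≥0))) =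
      (∑' j, ENNReal.ofReal (Real.exp (-w j))) ^ q := by
  rw [← tsum_prod_pi_eq_pow]
  refine tsum_congr fun s => ?_
  rw [NNReal.coe_sum, ← Finset.sum_neg_distrib, Real.exp_sum,
    ENNReal.ofReal_prod_of_nonneg fun i _ => Real.exp_nonneg _]

theorem limsup_partEntropy_refinedAtoms_le [L.NeBot] [L.IsCountablyGenerated] [IsFiniteMeasure ν]
    (hfs : ∀ c, MeasurePreserving f (νs c) (νs c)) (hf : MeasurePreserving f ν ν)
    (hPs : ∀ c, IsAEPartition (νs c) P) (hP : IsAEPartition ν P) {q : ℕ}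
    (hatoms : ∀ s, Tendsto (fun c => νs c (refinedAtoms f P q s)) L (𝓝 (ν (refinedAtoms f P q s))))
    {w : ℕ → ℝ≥0} (hexp : ∑' j, ENNReal.ofReal (Real.exp (-w j)) ≠ ∞)
    (hfin : ∑' j, w j * ν (P j) ≠ ∞)
    (hsup : limsup (fun c => ∑' j, w j * νs c (P j)) L ≤ ∑' j, w j * ν (P j)) :
    limsup (fun c => partEntropy (νs c) (refinedAtoms f P q)) L ≤
      partEntropy ν (refinedAtoms f P q) := by
  have hsum {ν' : Measure α} (hf' : MeasurePreserving f ν' ν') (hP' : IsAEPartition ν' P) :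
      ∑' s, (∑ i, w (s i) : ℝ≥0) * ν' (refinedAtoms f P q s) = q * ∑' j, w j * ν' (P j) := by
    simpa only [ENNReal.ofNNReal_finsetSum] using
      tsum_sum_mul_measure_refinedAtoms hf' hP' (fun j => w j) q
  refine limsup_partEntropy_le hatoms (w := fun s => ∑ i, w (s i)) ?_ ?_ ?_
  · rw [tsum_ofReal_exp_neg_sum]
    exact ENNReal.pow_ne_top hexp
  · rw [hsum hf hP]
    exact ENNReal.mul_ne_top (ENNReal.natCast_ne_top q) hfin
  · simp only [hsum (hfs _) (hPs _), hsum hf hP]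
    rw [ENNReal.limsup_const_mul_of_ne_top (ENNReal.natCast_ne_top q)]
    gcongr

theorem limsup_dynEntropy_le
    (h : ∀ q : ℕ, limsup (fun c => partEntropy (νs c) (refinedAtoms f P q)) L ≤
      partEntropy ν (refinedAtoms f P q)) :
    limsup (fun c => dynEntropy f (νs c) P) L ≤ dynEntropy f ν P := by
  refine le_iInf fun q => ?_
  calc limsup (fun c => dynEntropy f (νs c) P) L
      ≤ limsup (fun c => (q + 1 : ℝ≥0∞)⁻¹ * partEntropy (νs c) (refinedAtoms f P (q + 1))) L := by
        simp only [← ENNReal.div_eq_inv_mul]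
        exact limsup_le_limsup (.of_forall fun c => iInf_le _ q)
    _ = (q + 1 : ℝ≥0∞)⁻¹ * limsup (fun c => partEntropy (νs c) (refinedAtoms f P (q + 1))) L :=
        ENNReal.limsup_const_mul_of_ne_top (by simp)
    _ ≤ (q + 1 : ℝ≥0∞)⁻¹ * partEntropy ν (refinedAtoms f P (q + 1)) := by
        gcongr
        exact h (q + 1)
    _ = partEntropy ν (refinedAtoms f P (q + 1)) / (q + 1) := ENNReal.div_eq_inv_mul.symm

end LimsupEntropy

theorem summable_comp_of_ncard_fiber_le {ι κ : Type*} {N : ι → κ} {u B : κ → ℝ}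
    (hu : ∀ n, 0 ≤ u n) (hfin : ∀ n, (N ⁻¹' {n}).Finite) (hcard : ∀ n, (N ⁻¹' {n}).ncard ≤ B n)
    (hsum : Summable fun n => B n * u n) : Summable fun i => u (N i) := by
  refine (Equiv.sigmaFiberEquiv N).summable_iff.1 <| (summable_sigma_of_nonneg fun _ => hu _).2 ?_
  have hfiber (n : κ) (i : {i // N i = n}) : u (N i) = u n := congrArg u i.2
  have (n : κ) : Finite {i // N i = n} := (hfin n).to_subtype
  refine ⟨fun n => .of_finite, hsum.of_nonneg_of_le
    (fun n => tsum_nonneg fun _ => hu _) fun n => ?_⟩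
  simp only [Equiv.sigmaFiberEquiv_apply, hfiber, tsum_const, nsmul_eq_mul]
  exact mul_le_mul_of_nonneg_right (hcard n) (hu n)

namespace IsManePartition

variable {α : Type*} [MetricSpace α] [MeasurableSpace α] {k : ℕ} {η : α → ℝ} {P : ℕ → Set α}

theorem exists_ncard_fiber_le (hP : IsManePartition k η P) :
    ∃ (N : ℕ → ℕ) (C : ℝ), (∀ j, P j ⊆ Vset η (N j)) ∧ ∀ n, (N ⁻¹' {n}).Finite ∧
      (N ⁻¹' {n}).ncard ≤ C * Real.exp (2 * k * (n + 1)) := by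
  obtain ⟨-, hV, C, -, hcard⟩ := hP
  choose! M hM using hV
  classical
  refine ⟨fun j => if (P j).Nonempty then M j else j, C + 1, fun j => ?_, fun n => ?_⟩
  · rcases (P j).eq_empty_or_nonempty with hj | hj
    · simp only [hj, empty_subset]
    · simpa only [if_pos hj] using (hM j hj).1
  · set T := {i | (P i).Nonempty ∧ P i ⊆ Vset η n}
    -- an empty atom is sent to its own index, so it adds at most one element to each fiber
    have hsub : (fun j => if (P j).Nonempty then M j else j) ⁻¹' {n} ⊆ insert n T := by
      intro j hj
      rw [mem_preimage, mem_singleton_iff] at hj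
      split_ifs at hj with hne
      · exact .inr ⟨hne, hj ▸ (hM j hne).1⟩
      · exact .inl hj
    obtain ⟨hT, hTcard⟩ := hcard n
    refine ⟨(hT.insert n).subset hsub, ?_⟩
    calc (((fun j => if (P j).Nonempty then M j else j) ⁻¹' {n}).ncard : ℝ)
        ≤ T.ncard + 1 := mod_cast (ncard_le_ncard hsub (hT.insert n)).trans (ncard_insert_le n T)
      _ ≤ C * Real.exp (2 * k * (n + 1)) + 1 * Real.exp (2 * k * (n + 1)) := by
        gcongr
        rw [one_mul]
        exact Real.one_le_exp (by positivity)
      _ = (C + 1) * Real.exp (2 * k * (n + 1)) := by ring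

theorem exists_weight (hP : IsManePartition k η P) :
    ∃ w : ℕ → ℝ≥0, Summable (fun j => Real.exp (-w j)) ∧
      ∀ j, ∀ x ∈ P j, w j ≤ -(2 * k + 1) * Real.log (η x) := by
  obtain ⟨N, C, hN, hcard⟩ := hP.exists_ncard_fiber_le
  refine ⟨fun j => (2 * k + 1) * N j, ?_, fun j x hx => ?_⟩
  · push_cast
    refine summable_comp_of_ncard_fiber_le (u := fun n : ℕ => Real.exp (-((2 * k + 1) * n)))
      (fun n => Real.exp_nonneg _) (fun n => (hcard n).1) (fun n => (hcard n).2) ?_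
    refine (Real.summable_exp_neg_nat.mul_left (C * Real.exp (2 * k))).congr fun n => ?_
    rw [mul_assoc, mul_assoc, ← Real.exp_add, ← Real.exp_add]
    ring_nf
  · obtain ⟨hlt, hle⟩ := hN j hx
    have hlog : Real.log (η x) ≤ -N j :=
      (Real.log_le_iff_le_exp ((Real.exp_pos _).trans hlt)).2 hle
    push_cast
    calc ((2 * k + 1) * N j : ℝ) = -(2 * k + 1) * -N j := (neg_mul_neg _ _).symm
      _ ≤ -(2 * k + 1) * Real.log (η x) :=
        mul_le_mul_of_nonpos_left hlog (neg_nonpos.2 (by positivity))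

end IsManePartition

theorem IsCountablePartition.isAEPartition {α : Type*} [MeasurableSpace α] {S : Set α}
    {P : ℕ → Set α} (hP : IsCountablePartition S P) {ν : Measure α} (hS : ∀ᵐ x ∂ν, x ∈ S) :
    IsAEPartition ν P :=
  ⟨hP.1, hP.2.1, by simpa only [hP.2.2] using hS⟩

namespace MemM

variable {α : Type*} [MeasurableSpace α] {f : α → α} {I : Set α} {ν : Measure α}

theorem measurePreserving (hν : MemM f I ν) (hf : Measurable f) : MeasurePreserving f ν ν :=
  ⟨hf, hν.2.2⟩

theorem ae_notMem (hν : MemM f I ν) : ∀ᵐ x ∂ν, x ∉ I :=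
  measure_eq_zero_iff_ae_notMem.1 hν.2.1

theorem dynEntropy_inter_dynOmega (hν : MemM f I ν) (hf : Measurable f) (P : ℕ → Set α) :
    dynEntropy f ν (fun i => P i ∩ dynOmega f I) = dynEntropy f ν P := by
  have hqmp := (hν.measurePreserving hf).quasiMeasurePreserving
  have hΩ : dynOmega f I ∈ ae ν := ae_forall_iterate hqmp hν.ae_notMem
  exact dynEntropy_congr_ae hqmp fun j => inter_ae_eq_left_of_ae_eq_univ (eventuallyEq_univ.2 hΩ)

end MemM

theorem tendsto_measure_refinedAtoms {α γ : Type*} [TopologicalSpace α] [MeasurableSpace α]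
    [OpensMeasurableSpace α] [HasOuterApproxClosed α] {L : Filter γ}
    {μs : γ → ProbabilityMeasure α} {μ : ProbabilityMeasure α} (hμs : Tendsto μs L (𝓝 μ))
    {f : α → α} (hf : Measure.QuasiMeasurePreserving f (μ : Measure α) μ)
    (hfc : ∀ᵐ x ∂(μ : Measure α), ContinuousAt f x) {P : ℕ → Set α}
    (hfr : ∀ j, (μ : Measure α) (frontier (P j)) = 0) {q : ℕ} (s : Fin q → ℕ) :
    Tendsto (fun c => (μs c : Measure α) (refinedAtoms f P q s)) L
      (𝓝 ((μ : Measure α) (refinedAtoms f P q s))) :=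
  ProbabilityMeasure.tendsto_measure_of_null_frontier_of_tendsto' hμs
    (measure_frontier_refinedAtoms_eq_zero hf hfc hfr s)

theorem entropy_wrt_mane_partition_usc_general {α γ : Type*} [TopologicalSpace α]
    [MeasurableSpace α] [OpensMeasurableSpace α] [HasOuterApproxClosed α]
    {L : Filter γ} [L.NeBot] [L.IsCountablyGenerated]
    {f : α → α} {I : Set α} (hI : IsClosed I) (hf : Measurable f) (hfc : ContinuousOn f Iᶜ)
    {S : Set α} {P : ℕ → Set α} (hP : IsCountablePartition S P)
    {φ : α → ℝ} (hφ : ContinuousOn φ S)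
    {w : ℕ → ℝ≥0} (hexp : Summable fun j => Real.exp (-w j)) (hw : ∀ j, ∀ x ∈ P j, w j ≤ φ x)
    {μs : γ → ProbabilityMeasure α} {μ : ProbabilityMeasure α}
    (hμs : ∀ c, MemM f I (μs c)) (hμ : MemM f I μ) (hweak : Tendsto μs L (𝓝 μ))
    (hSs : ∀ c, ∀ᵐ x ∂(μs c : Measure α), x ∈ S) (hS : ∀ᵐ x ∂(μ : Measure α), x ∈ S)
    (hints : ∀ c, Integrable φ (μs c)) (hint : Integrable φ μ)
    (hlim : Tendsto (fun c => ∫ x, φ x ∂(μs c)) L (𝓝 (∫ x, φ x ∂μ)))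
    (hfr : ∀ j, (μ : Measure α) (frontier (P j)) = 0) :
    limsup (fun c => dynEntropy f (μs c) (fun j => P j ∩ dynOmega f I)) L ≤
      dynEntropy f μ (fun j => P j ∩ dynOmega f I) := by
  simp only [(hμs _).dynEntropy_inter_dynOmega hf, hμ.dynEntropy_inter_dynOmega hf]
  have hAEs (c : γ) : IsAEPartition (μs c : Measure α) P := hP.isAEPartition (hSs c)
  have hAE : IsAEPartition (μ : Measure α) P := hP.isAEPartition hS
  have hfpres : MeasurePreserving f (μ : Measure α) μ := hμ.measurePreserving hf
  have hcont : ∀ᵐ x ∂(μ : Measure α), ContinuousAt f x :=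
    hμ.ae_notMem.mono fun x hx => hfc.continuousAt (hI.isOpen_compl.mem_nhds hx)
  have hPS (j : ℕ) : P j ⊆ S := hP.2.2 ▸ subset_iUnion P j
  have hweights : limsup (fun c => ∑' j, w j * (μs c : Measure α) (P j)) L ≤
      ∑' j, w j * (μ : Measure α) (P j) :=
    hAE.limsup_tsum_mul_measure_le hAEs hweak hfr
      (fun j => hφ.mono (interior_subset.trans (hPS j))) hints hint hlim hw
  exact limsup_dynEntropy_le fun q =>
    limsup_partEntropy_refinedAtoms_le (fun c => (hμs c).measurePreserving hf) hfpres hAEs hAE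
      (tendsto_measure_refinedAtoms hweak hfpres.quasiMeasurePreserving hcont hfr)
      hexp.tsum_ofReal_ne_top (hAE.tsum_mul_measure_ne_top hint hw) hweights

/-- **Proposition (upper semicontinuity of `h_·(f,𝒫)`).** Let `(μ_n)` be a sequence of `𝓜`
converging weakly to `μ ∈ 𝓜` with `lim_n ∫ log η dμ_n = ∫ log η dμ > -∞` (the condition
`> -∞` is encoded as integrability of `log ∘ η` together with `ν{η = 0} = 0`). If `μ`
gives no mass to the boundaries of the atoms of the Mané partition `𝒫`, then
`limsup_n h_{μ_n}(f, 𝒫) ≤ h_μ(f, 𝒫)`, where `𝒫` is restricted to `Ω`. -/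
theorem entropy_wrt_mane_partition_usc
    (k : ℕ) (f : X → X) (I : Set X) (hI : IsClosed I)
    (hf : Measurable f) (hfc : ContinuousOn f Iᶜ)
    (η : X → ℝ) (hηc : Continuous η) (hη01 : ∀ x, η x ∈ Icc (0 : ℝ) 1)
    (hηI : ∀ x ∈ I, η x = 0)
    (P : ℕ → Set X) (hP : IsManePartition k η P)
    (μseq : ℕ → Measure X) (μ : Measure X)
    (hμseq : ∀ n, MemM f I (μseq n)) (hμ : MemM f I μ)
    (hweak : ∀ g : C(X, ℝ),
      Tendsto (fun n => ∫ x, g x ∂(μseq n)) atTop (𝓝 (∫ x, g x ∂μ)))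
    (hint : ∀ n, Integrable (fun x => Real.log (η x)) (μseq n))
    (hzero : ∀ n, (μseq n) {x | η x = 0} = 0)
    (hintμ : Integrable (fun x => Real.log (η x)) μ)
    (hzeroμ : μ {x | η x = 0} = 0)
    (hlim : Tendsto (fun n => ∫ x, Real.log (η x) ∂(μseq n)) atTop
      (𝓝 (∫ x, Real.log (η x) ∂μ)))
    (hbd : ∀ i, μ (frontier (P i)) = 0) :
    Filter.limsup
      (fun n => dynEntropy f (μseq n) (fun i => P i ∩ dynOmega f I)) atTop
      ≤ dynEntropy f μ (fun i => P i ∩ dynOmega f I) := by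
  obtain ⟨w, hexp, hw⟩ := hP.exists_weight
  let νs (n : ℕ) : ProbabilityMeasure X := ⟨μseq n, (hμseq n).1⟩
  let ν : ProbabilityMeasure X := ⟨μ, hμ.1⟩
  have hνs : Tendsto νs atTop (𝓝 ν) :=
    ProbabilityMeasure.tendsto_iff_forall_integral_tendsto.2 fun g => hweak g.toContinuousMap
  exact entropy_wrt_mane_partition_usc_general (μs := νs) (μ := ν)
    (φ := fun x => -(2 * k + 1) * Real.log (η x)) hI hf hfc hP.1
    (continuousOn_const.mul (hηc.continuousOn.log fun _ hx => hx)) hexp hw hμseq hμ hνs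
    (fun n => measure_eq_zero_iff_ae_notMem.1 (hzero n))
    (measure_eq_zero_iff_ae_notMem.1 hzeroμ)
    (fun n => (hint n).const_mul _) (hintμ.const_mul _)
    (by simp only [integral_const_mul]; exact hlim.const_mul _) hbd
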